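/- (Heine's q-Gauss summation formula) Let q, a, b, c be complex numbers with |q| < 1, a ≠ 0, b ≠ 0, |c/(ab)| < 1, and c ∉ {q^{-m} : m = 0,1,2,...}. Then ∑_{n=0}^∞ ((a;q)_n (b;q)_n / ((q;q)_n (c;q)_n)) (c/(ab))^n = (c/a;q)_∞ (c/b;q)_∞ / ((c;q)_∞ (c/(ab);q)_∞). -/

import Mathlib

/-- The finite q-shifted factorial `(a;q)_n = ∏_{k=0}^{n-1} (1 - a q^k)`. -/
noncomputable def qPoch (a q : ℂ) (n : ℕ) : ℂ := ∏ k ∈ Finset.range n, (1 - a * q ^ k)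

/-- The infinite q-shifted factorial `(a;q)_∞ = ∏_{k=0}^∞ (1 - a q^k)`. -/
noncomputable def qPochInf (a q : ℂ) : ℂ := ∏' k : ℕ, (1 - a * q ^ k)

/-!
Write `c = a b x`, so that `c / (ab) = x`, `c / a = b x`, `c / b = a x` and no division is left
(`a = 0` then gives the `q`-binomial theorem). With `a` and `b` fixed, the sum `F(x)` of the series
satisfies the contiguous relation
`(1 - abx) (1 - x) F(x) = (1 - ax) (1 - bx) F(xq)`,
because the termwise difference of the two sides telescopes. Iterating `N` times yields
`(abx;q)_N (x;q)_N F(x) = (ax;q)_N (bx;q)_N F(x q^N)`,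
and `F(x q^N) → 1` by dominated convergence.
-/

open Filter Topology

theorem hasSum_sub_succ {G : Type*} [AddCommGroup G] [TopologicalSpace G] [IsTopologicalAddGroup G]
    {u : ℕ → G} (hu : Summable u) : HasSum (fun n ↦ u n - u (n + 1)) (u 0) := by
  simpa using hu.hasSum.sub ((hasSum_nat_add_iff' 1).2 hu.hasSum)

theorem exists_norm_le_of_tendsto {E : Type*} [SeminormedAddCommGroup E] {u : ℕ → E} {l : E}
    (hu : Tendsto u atTop (𝓝 l)) : ∃ M, ∀ n, ‖u n‖ ≤ M := by
  simpa using (Metric.isBounded_range_of_tendsto u hu).exists_norm_le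

section NormedDivisionRing

variable {𝕜 : Type*} [NormedDivisionRing 𝕜] {q x : 𝕜}

theorem norm_mul_pow_le (hq : ‖q‖ ≤ 1) (x : 𝕜) (n : ℕ) : ‖x * q ^ n‖ ≤ ‖x‖ := by
  rw [norm_mul, norm_pow]
  exact mul_le_of_le_one_right (norm_nonneg x) (pow_le_one₀ (norm_nonneg q) hq)

theorem mul_pow_ne_one (hq : ‖q‖ ≤ 1) (hx : ‖x‖ < 1) (n : ℕ) : x * q ^ n ≠ 1 := fun h ↦
  ((norm_mul_pow_le hq x n).trans_lt hx).ne (by rw [h, norm_one])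

end NormedDivisionRing

section qPoch

variable {q c : ℂ}

theorem qPoch_zero (a q : ℂ) : qPoch a q 0 = 1 := Finset.prod_range_zero _

theorem qPoch_succ (a q : ℂ) (n : ℕ) : qPoch a q (n + 1) = qPoch a q n * (1 - a * q ^ n) :=
  Finset.prod_range_succ _ _

theorem qPoch_add (a q : ℂ) (m n : ℕ) :
    qPoch a q (m + n) = qPoch a q m * qPoch (a * q ^ m) q n := by
  simp only [qPoch, Finset.prod_range_add, pow_add, mul_assoc]

theorem one_sub_mul_qPoch_mul (a q : ℂ) (n : ℕ) :
    (1 - a) * qPoch (a * q) q n = qPoch a q n * (1 - a * q ^ n) := by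
  rw [← qPoch_succ, add_comm, qPoch_add, qPoch_succ, qPoch_zero, pow_zero, pow_one, mul_one,
    one_mul]

theorem qPoch_ne_zero (hc : ∀ m : ℕ, c * q ^ m ≠ 1) (n : ℕ) : qPoch c q n ≠ 0 :=
  Finset.prod_ne_zero_iff.2 fun k _ ↦ sub_ne_zero.2 (hc k).symm

theorem qPoch_self_ne_zero (hq : ‖q‖ < 1) (n : ℕ) : qPoch q q n ≠ 0 :=
  qPoch_ne_zero (mul_pow_ne_one hq.le hq) n

theorem summable_norm_neg_mul_pow (hq : ‖q‖ < 1) (a : ℂ) :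
    Summable fun k : ℕ ↦ ‖-(a * q ^ k)‖ := by
  simpa only [norm_neg, norm_mul] using
    (summable_norm_geometric_of_norm_lt_one hq).mul_left ‖a‖

theorem tendsto_qPoch (hq : ‖q‖ < 1) (a : ℂ) :
    Tendsto (qPoch a q) atTop (𝓝 (qPochInf a q)) := by
  have hprod :=
    (multipliable_one_add_of_summable (summable_norm_neg_mul_pow hq a)).tendsto_prod_tprod_nat
  simp only [← sub_eq_add_neg] at hprod
  exact hprod

theorem qPochInf_ne_zero (hq : ‖q‖ < 1) (hc : ∀ m : ℕ, c * q ^ m ≠ 1) : qPochInf c q ≠ 0 := by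
  have hfactor : ∀ m : ℕ, 1 + -(c * q ^ m) ≠ 0 := fun m ↦ by
    simpa only [← sub_eq_add_neg] using sub_ne_zero.2 (hc m).symm
  simpa only [qPochInf, sub_eq_add_neg] using
    tprod_one_add_ne_zero_of_summable hfactor (summable_norm_neg_mul_pow hq c)

theorem exists_norm_qPoch_le (hq : ‖q‖ < 1) (a : ℂ) : ∃ M, ∀ n, ‖qPoch a q n‖ ≤ M :=
  exists_norm_le_of_tendsto (tendsto_qPoch hq a)

theorem exists_norm_inv_qPoch_le (hq : ‖q‖ < 1) (hc : ∀ m : ℕ, c * q ^ m ≠ 1) :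
    ∃ M, ∀ n, ‖(qPoch c q n)⁻¹‖ ≤ M :=
  exists_norm_le_of_tendsto ((tendsto_qPoch hq c).inv₀ (qPochInf_ne_zero hq hc))

theorem exists_norm_inv_qPoch_mul_pow_le (hq : ‖q‖ < 1) (hc : ∀ m : ℕ, c * q ^ m ≠ 1) :
    ∃ M, ∀ N n : ℕ, ‖(qPoch (c * q ^ N) q n)⁻¹‖ ≤ M := by
  obtain ⟨A, hA⟩ := exists_norm_qPoch_le hq c
  obtain ⟨B, hB⟩ := exists_norm_inv_qPoch_le hq hc
  refine ⟨A * B, fun N n ↦ ?_⟩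
  have hA₀ : 0 ≤ A := (norm_nonneg _).trans (hA N)
  have hsplit : (qPoch (c * q ^ N) q n)⁻¹ = qPoch c q N * (qPoch c q (N + n))⁻¹ := by
    rw [qPoch_add, mul_inv, mul_inv_cancel_left₀ (qPoch_ne_zero hc N)]
  rw [hsplit, norm_mul]
  gcongr
  exacts [hA N, hB (N + n)]

end qPoch

/-- The `n`-th term of Heine's basic hypergeometric series `₂φ₁(a, b; c; q, z)`. -/
noncomputable def heineTerm (q a b c z : ℂ) (n : ℕ) : ℂ :=
  qPoch a q n * qPoch b q n / (qPoch q q n * qPoch c q n) * z ^ n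

/-- Heine's basic hypergeometric series `₂φ₁(a, b; c; q, z)`, with junk value `0` where the series
is not summable. -/
noncomputable def heineSeries (q a b c z : ℂ) : ℂ := ∑' n, heineTerm q a b c z n

section Heine

variable {q a b c x z : ℂ}

theorem heineTerm_zero (q a b c z : ℂ) : heineTerm q a b c z 0 = 1 := by
  simp [heineTerm, qPoch_zero]

theorem heineTerm_mul_right (q a b c z w : ℂ) (n : ℕ) :
    heineTerm q a b c (z * w) n = w ^ n * heineTerm q a b c z n := by
  rw [heineTerm, heineTerm, mul_pow]
  ring

theorem heineTerm_succ (hq : ‖q‖ < 1) (hc : ∀ m : ℕ, c * q ^ m ≠ 1) (n : ℕ) :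
    (1 - q ^ (n + 1)) * (1 - c * q ^ n) * heineTerm q a b c z (n + 1) =
      (1 - a * q ^ n) * (1 - b * q ^ n) * z * heineTerm q a b c z n := by
  have hcn : 1 - c * q ^ n ≠ 0 := sub_ne_zero.2 (hc n).symm
  have hqn : 1 - q * q ^ n ≠ 0 := sub_ne_zero.2 (mul_pow_ne_one hq.le hq n).symm
  have hC := qPoch_ne_zero hc n
  have hQ := qPoch_self_ne_zero hq n
  simp only [heineTerm, qPoch_succ, pow_succ' q, pow_succ z]
  generalize 1 - c * q ^ n = u at hcn ⊢
  field_simp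

theorem one_sub_mul_heineTerm_mul (hc : ∀ m : ℕ, c * q ^ m ≠ 1) (n : ℕ) :
    (1 - c * q ^ n) * heineTerm q a b (c * q) z n = (1 - c) * heineTerm q a b c z n := by
  have hcq : ∀ m : ℕ, c * q * q ^ m ≠ 1 := fun m ↦ by
    simpa only [pow_succ', mul_assoc] using hc (m + 1)
  have hC := qPoch_ne_zero hc n
  have hCq := qPoch_ne_zero hcq n
  have hshift : (qPoch (c * q) q n)⁻¹ * (1 - c * q ^ n) = (qPoch c q n)⁻¹ * (1 - c) := by
    field_simp
    linear_combination -one_sub_mul_qPoch_mul c q n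
  simp only [heineTerm, div_eq_mul_inv, mul_inv]
  linear_combination qPoch a q n * qPoch b q n * (qPoch q q n)⁻¹ * z ^ n * hshift

theorem exists_norm_heineTerm_le (hq : ‖q‖ < 1) (a b : ℂ) (hc : ∀ m : ℕ, c * q ^ m ≠ 1) :
    ∃ K, ∀ (N n : ℕ) (z : ℂ), ‖heineTerm q a b (c * q ^ N) z n‖ ≤ K * ‖z‖ ^ n := by
  obtain ⟨A, hA⟩ := exists_norm_qPoch_le hq a
  obtain ⟨B, hB⟩ := exists_norm_qPoch_le hq b
  obtain ⟨Q, hQ⟩ := exists_norm_inv_qPoch_le hq (mul_pow_ne_one hq.le hq)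
  obtain ⟨C, hC⟩ := exists_norm_inv_qPoch_mul_pow_le hq hc
  refine ⟨A * B * (Q * C), fun N n z ↦ ?_⟩
  have hA₀ : 0 ≤ A := (norm_nonneg _).trans (hA n)
  have hB₀ : 0 ≤ B := (norm_nonneg _).trans (hB n)
  have hQ₀ : 0 ≤ Q := (norm_nonneg _).trans (hQ n)
  simp only [heineTerm, div_eq_mul_inv, mul_inv, norm_mul, norm_pow z]
  gcongr
  exacts [hA n, hB n, hQ n, hC N n]

theorem summable_heineTerm (hq : ‖q‖ < 1) (hz : ‖z‖ < 1) (a b : ℂ)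
    (hc : ∀ m : ℕ, c * q ^ m ≠ 1) : Summable (heineTerm q a b c z) := by
  obtain ⟨K, hK⟩ := exists_norm_heineTerm_le hq a b hc
  refine ((summable_geometric_of_lt_one (norm_nonneg z) hz).mul_left K).of_norm_bounded fun n ↦ ?_
  simpa only [pow_zero, mul_one] using hK 0 n z

theorem tendsto_heineSeries_mul_pow (hq : ‖q‖ < 1) (hz : ‖z‖ < 1) (a b : ℂ)
    (hc : ∀ m : ℕ, c * q ^ m ≠ 1) :
    Tendsto (fun N : ℕ ↦ heineSeries q a b (c * q ^ N) (z * q ^ N)) atTop (𝓝 1) := by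
  obtain ⟨K, hK⟩ := exists_norm_heineTerm_le hq a b hc
  have hK₀ : 0 ≤ K := (norm_nonneg _).trans (by simpa using hK 0 0 0)
  have hdom (N n : ℕ) : ‖heineTerm q a b (c * q ^ N) (z * q ^ N) n‖ ≤ K * ‖z‖ ^ n :=
    (hK N n _).trans (by gcongr; exact norm_mul_pow_le hq.le z N)
  have hzq : Tendsto (fun N : ℕ ↦ ‖z * q ^ N‖) atTop (𝓝 0) := by
    simpa using ((tendsto_pow_atTop_nhds_zero_of_norm_lt_one hq).const_mul z).norm
  have hterm (n : ℕ) : Tendsto (fun N : ℕ ↦ heineTerm q a b (c * q ^ N) (z * q ^ N) n) atTop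
      (𝓝 (Pi.single (M := fun _ ↦ ℂ) 0 1 n)) := by
    rcases eq_or_ne n 0 with rfl | hn
    · simp only [heineTerm_zero, Pi.single_eq_same, tendsto_const_nhds]
    · rw [Pi.single_eq_of_ne hn]
      refine squeeze_zero_norm (fun N ↦ hK N n _) ?_
      simpa [hn] using (hzq.pow n).const_mul K
  simpa only [heineSeries, tsum_pi_single] using tendsto_tsum_of_dominated_convergence
    ((summable_geometric_of_lt_one (norm_nonneg z) hz).mul_left K) hterm
    (Eventually.of_forall hdom)

theorem heineTerm_contiguous (hq : ‖q‖ < 1) (hc : ∀ m : ℕ, a * b * x * q ^ m ≠ 1) (n : ℕ) :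
    (1 - a * b * x) * (1 - x) * heineTerm q a b (a * b * x) x n -
        (1 - a * x) * (1 - b * x) * heineTerm q a b (a * b * x * q) (x * q) n =
      (1 - a * b * x) * ((1 - q ^ n) * heineTerm q a b (a * b * x) x n -
        (1 - q ^ (n + 1)) * heineTerm q a b (a * b * x) x (n + 1)) := by
  refine mul_left_cancel₀ (sub_ne_zero.2 (hc n).symm) ?_
  rw [heineTerm_mul_right]
  linear_combination (1 - a * b * x) * heineTerm_succ (a := a) (b := b) (z := x) hq hc n -
    (1 - a * x) * (1 - b * x) * q ^ n * one_sub_mul_heineTerm_mul (a := a) (b := b) (z := x) hc n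

theorem heineSeries_contiguous (hq : ‖q‖ < 1) (hx : ‖x‖ < 1)
    (hc : ∀ m : ℕ, a * b * x * q ^ m ≠ 1) :
    (1 - a * b * x) * (1 - x) * heineSeries q a b (a * b * x) x =
      (1 - a * x) * (1 - b * x) * heineSeries q a b (a * b * x * q) (x * q) := by
  have hxq : ‖x * q‖ < 1 := by simpa using (norm_mul_pow_le hq.le x 1).trans_lt hx
  have hcq : ∀ m : ℕ, a * b * x * q * q ^ m ≠ 1 := fun m ↦ by
    simpa only [pow_succ', mul_assoc] using hc (m + 1)
  have hsum := summable_heineTerm hq hx a b hc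
  have hsum' := summable_heineTerm hq hxq a b hcq
  have hweighted : Summable fun n ↦ (1 - q ^ n) * heineTerm q a b (a * b * x) x n := by
    simpa only [heineTerm_mul_right, sub_mul, one_mul] using
      hsum.sub (summable_heineTerm hq hxq a b hc)
  have hdiff := (hsum.hasSum.mul_left ((1 - a * b * x) * (1 - x))).sub
    (hsum'.hasSum.mul_left ((1 - a * x) * (1 - b * x)))
  simp only [heineTerm_contiguous hq hc] at hdiff
  have htelescope := (hasSum_sub_succ hweighted).mul_left (1 - a * b * x)
  simp only [pow_zero, sub_self, zero_mul, mul_zero] at htelescope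
  exact sub_eq_zero.1 (hdiff.unique htelescope)

theorem qPoch_mul_heineSeries (hq : ‖q‖ < 1) (hx : ‖x‖ < 1)
    (hc : ∀ m : ℕ, a * b * x * q ^ m ≠ 1) (N : ℕ) :
    qPoch (a * b * x) q N * qPoch x q N * heineSeries q a b (a * b * x) x =
      qPoch (a * x) q N * qPoch (b * x) q N *
        heineSeries q a b (a * b * x * q ^ N) (x * q ^ N) := by
  induction N with
  | zero => simp [qPoch_zero]
  | succ N ih =>
    have hxN : ‖x * q ^ N‖ < 1 := (norm_mul_pow_le hq.le x N).trans_lt hx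
    have hcN : ∀ m : ℕ, a * b * (x * q ^ N) * q ^ m ≠ 1 := fun m ↦ by
      simpa only [pow_add, mul_assoc] using hc (N + m)
    have hstep := heineSeries_contiguous hq hxN hcN
    simp only [← mul_assoc] at hstep
    simp only [qPoch_succ, pow_succ, ← mul_assoc]
    linear_combination (1 - a * b * x * q ^ N) * (1 - x * q ^ N) * ih +
      qPoch (a * x) q N * qPoch (b * x) q N * hstep

theorem heineSeries_gauss (hq : ‖q‖ < 1) (hx : ‖x‖ < 1)
    (hc : ∀ m : ℕ, a * b * x * q ^ m ≠ 1) :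
    heineSeries q a b (a * b * x) x =
      qPochInf (a * x) q * qPochInf (b * x) q / (qPochInf (a * b * x) q * qPochInf x q) := by
  have hleft := ((tendsto_qPoch hq (a * b * x)).mul (tendsto_qPoch hq x)).mul_const
    (heineSeries q a b (a * b * x) x)
  have hright := ((tendsto_qPoch hq (a * x)).mul (tendsto_qPoch hq (b * x))).mul
    (tendsto_heineSeries_mul_pow hq hx a b hc)
  simp only [qPoch_mul_heineSeries hq hx hc] at hleft
  rw [eq_div_iff (mul_ne_zero (qPochInf_ne_zero hq hc)
    (qPochInf_ne_zero hq (mul_pow_ne_one hq.le hx))), mul_comm]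
  simpa only [mul_one] using tendsto_nhds_unique hleft hright

theorem q_gauss_summation_general (hq : ‖q‖ < 1) (hx : ‖x‖ < 1)
    (hc : ∀ m : ℕ, a * b * x * q ^ m ≠ 1) :
    HasSum (heineTerm q a b (a * b * x) x)
      (qPochInf (a * x) q * qPochInf (b * x) q / (qPochInf (a * b * x) q * qPochInf x q)) :=
  heineSeries_gauss hq hx hc ▸ (summable_heineTerm hq hx a b hc).hasSum

end Heine

/-- Heine's q-Gauss summation formula: for `|q| < 1`, `a, b ≠ 0`, `|c/(ab)| < 1`,
with `c` avoiding the points `q^{-m}` (i.e. `c q^m ≠ 1`),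
`₂φ₁(a,b;c;q,c/(ab)) = (c/a;q)_∞ (c/b;q)_∞ / ((c;q)_∞ (c/(ab);q)_∞)`. -/
theorem q_gauss_summation (q a b c : ℂ) (hq : ‖q‖ < 1) (ha : a ≠ 0) (hb : b ≠ 0)
    (h : ‖c / (a * b)‖ < 1) (hc : ∀ m : ℕ, c * q ^ m ≠ 1) :
    HasSum
      (fun n : ℕ =>
        qPoch a q n * qPoch b q n / (qPoch q q n * qPoch c q n) * (c / (a * b)) ^ n)
      (qPochInf (c / a) q * qPochInf (c / b) q /
        (qPochInf c q * qPochInf (c / (a * b)) q)) := by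
  have hab : a * b * (c / (a * b)) = c := mul_div_cancel₀ c (mul_ne_zero ha hb)
  have hca : b * (c / (a * b)) = c / a := by field_simp
  have hcb : a * (c / (a * b)) = c / b := by field_simp
  have hsum := q_gauss_summation_general (a := a) (b := b) hq h (by rwa [hab])
  rw [hab, hca, hcb, mul_comm (qPochInf (c / b) q)] at hsum
  exact hsum
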